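/- Over the alphabet {0,1}, the periodic strings (001)^ω and (01)^ω satisfy (001)^ω ≤_1qi (01)^ω and (01)^ω ≤_1qi (001)^ω (so they are 1qi-equivalent), but there is no pqi-reduction from (001)^ω to (01)^ω. -/

import Mathlib

/-- An infinite string over an alphabet `Γ` is a function `ℕ → Γ`, with positions
indexed from 1.  `IsQI C α β f` says that `f : ℕ → ℕ` is a `C`-quasi-isometry from
the string `α` to the string `β`: `C ≥ 1`, `f` maps positions (`≥ 1`) to positions,
`f` is color-preserving (`β (f x) = α x`), condition (a) holds (`f 1 ≤ C` and
`|f (x+1) − f x| ≤ C`), and condition (b) holds (`x + C < y → f x < f y`). -/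
def IsQI {Γ : Type*} (C : ℕ) (α β : ℕ → Γ) (f : ℕ → ℕ) : Prop :=
  1 ≤ C ∧
  (∀ x, 1 ≤ x → 1 ≤ f x) ∧
  (∀ x, 1 ≤ x → β (f x) = α x) ∧
  f 1 ≤ C ∧
  (∀ x, 1 ≤ x → |((f (x + 1) : ℤ)) - (f x : ℤ)| ≤ (C : ℤ)) ∧
  (∀ x y, 1 ≤ x → x + C < y → f x < f y)

/-- Quasi-isometric reducibility `α ≤_qi β`: some `C`-quasi-isometry from `α` to `β`
exists. -/
def QIred {Γ : Type*} (α β : ℕ → Γ) : Prop := ∃ C f, IsQI C α β f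

/-- Many-one quasi-isometric reducibility `α ≤_mqi β`: some computable
`C`-quasi-isometry from `α` to `β` exists. -/
def MQIred {Γ : Type*} (α β : ℕ → Γ) : Prop :=
  ∃ C f, IsQI C α β f ∧ Computable f

/-- One-one quasi-isometric reducibility `α ≤_1qi β`: some computable
`C`-quasi-isometry from `α` to `β` exists which is injective on positions. -/
def OQIred {Γ : Type*} (α β : ℕ → Γ) : Prop :=
  ∃ C f, IsQI C α β f ∧ Computable f ∧
    (∀ x y, 1 ≤ x → 1 ≤ y → f x = f y → x = y)

/-- Permutation quasi-isometric reducibility `α ≤_pqi β`: some computable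
`C`-quasi-isometry from `α` to `β` exists which is a bijection on positions. -/
def PQIred {Γ : Type*} (α β : ℕ → Γ) : Prop :=
  ∃ C f, IsQI C α β f ∧ Computable f ∧
    (∀ x y, 1 ≤ x → 1 ≤ y → f x = f y → x = y) ∧
    (∀ y, 1 ≤ y → ∃ x, 1 ≤ x ∧ f x = y)

/-- `α ≡_mqi β`. -/
def MQIequiv {Γ : Type*} (α β : ℕ → Γ) : Prop := MQIred α β ∧ MQIred β α

/-- `α ≡_1qi β`. -/
def OQIequiv {Γ : Type*} (α β : ℕ → Γ) : Prop := OQIred α β ∧ OQIred β α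

/-- `α ≡_pqi β`. -/
def PQIequiv {Γ : Type*} (α β : ℕ → Γ) : Prop := PQIred α β ∧ PQIred β α

/-- The periodic string `(01)^ω` over `{0,1}`: `0` at odd positions, `1` at even
positions. -/
def str01 : ℕ → Fin 2 := fun n => if n % 2 = 1 then 0 else 1

/-- The periodic string `(001)^ω` over `{0,1}`: `1` at positions divisible by 3,
`0` elsewhere. -/
def str001 : ℕ → Fin 2 := fun n => if n % 3 = 0 then 1 else 0

/-!
Both reductions are increasing and skip one position of the target per block `001` or `01` of the
source.

For the negative part, an injective `C`-quasi-isometry `f` satisfies `x ≤ f x + C`: by (b), all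
positions before `x - C` are sent, injectively, below `f x`. If `f` is also surjective, every
letter therefore occurs among the first `n + C` positions of the source at least as often as among
the first `n` positions of the target. For the letter `1`, sent from `(001)^ω` to `(01)^ω`, this
reads `n / 2 ≤ (n + C) / 3`, which fails for large `n`.
-/

/-- The number of occurrences of the letter `c` at the positions `1, …, n` of the string `α`. -/
def letterCount {Γ : Type*} [DecidableEq Γ] (α : ℕ → Γ) (c : Γ) (n : ℕ) : ℕ :=
  {x ∈ Finset.Ioc 0 n | α x = c}.card

namespace IsQI

variable {Γ : Type*} {C : ℕ} {α β : ℕ → Γ} {f : ℕ → ℕ}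

theorem of_strictMono (hmono : StrictMono f) (hone : f 1 ≤ C)
    (hstep : ∀ x, 1 ≤ x → f (x + 1) ≤ f x + C) (hcolor : ∀ x, 1 ≤ x → β (f x) = α x) :
    IsQI C α β f := by
  have hpos : ∀ x, 1 ≤ x → 1 ≤ f x := fun x hx ↦ hx.trans hmono.le_apply
  refine ⟨(hpos 1 le_rfl).trans hone, hpos, hcolor, hone, fun x hx ↦ ?_,
    fun x y _ hxy ↦ hmono (by omega)⟩
  have hlt : f x < f (x + 1) := hmono x.lt_succ_self
  have hle := hstep x hx
  rw [abs_le]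
  omega

theorem le_apply_add_of_injOn (hf : IsQI C α β f) (hinj : Set.InjOn f (Set.Ici 1)) {x : ℕ}
    (hx : 1 ≤ x) : x ≤ f x + C := by
  obtain ⟨-, hpos, -, -, -, hlt⟩ := hf
  have hmaps : Set.MapsTo f (Finset.Ico 1 (x - C)) (Finset.Ico 1 (f x)) := fun y hy ↦ by
    obtain ⟨hy₁, hyx⟩ := Finset.mem_Ico.mp hy
    exact Finset.mem_Ico.mpr ⟨hpos y hy₁, hlt y x hy₁ (by omega)⟩
  have hcard := Finset.card_le_card_of_injOn f hmaps
    (hinj.mono fun y hy ↦ (Finset.mem_Ico.mp hy).1)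
  have hfx := hpos x hx
  simp only [Nat.card_Ico] at hcard
  omega

theorem letterCount_le_of_bijOn [DecidableEq Γ] (hf : IsQI C α β f)
    (hbij : Set.BijOn f (Set.Ici 1) (Set.Ici 1)) (c : Γ) (n : ℕ) :
    letterCount β c n ≤ letterCount α c (n + C) := by
  refine Finset.card_le_card_of_surjOn f fun y hy ↦ ?_
  simp only [Finset.coe_filter, Finset.mem_Ioc, Set.mem_ofPred_eq] at hy
  obtain ⟨⟨hy₀, hyn⟩, hyc⟩ := hy
  obtain ⟨x, hx, rfl⟩ := hbij.surjOn hy₀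
  have hxn : x ≤ n + C := (hf.le_apply_add_of_injOn hbij.injOn hx).trans (by omega)
  have hxc : α x = c := (hf.2.2.1 x hx).symm.trans hyc
  exact ⟨x, by simpa using ⟨⟨hx, hxn⟩, hxc⟩, rfl⟩

end IsQI

theorem letterCount_eq_div {Γ : Type*} [DecidableEq Γ] {α : ℕ → Γ} {c : Γ} {p : ℕ}
    (hα : ∀ x, α x = c ↔ p ∣ x) (n : ℕ) : letterCount α c n = n / p := by
  simp only [letterCount, hα, Nat.Ioc_filter_dvd_card_eq_div]

/-- The increasing map which skips one value whenever its argument reaches a position `x` with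
`p ∣ x + a`. It is the identity for `p = 0`. -/
def skipMap (p a x : ℕ) : ℕ := x + (x + a) / p

theorem skipMap_succ (p a x : ℕ) :
    skipMap p a (x + 1) = skipMap p a x + 1 + if p ∣ x + a + 1 then 1 else 0 := by
  simp only [skipMap, Nat.add_right_comm x 1 a, Nat.succ_div]
  omega

theorem skipMap_strictMono (p a : ℕ) : StrictMono (skipMap p a) :=
  strictMono_nat_of_lt_succ fun x ↦ by rw [skipMap_succ]; omega

theorem skipMap_primrec (p a : ℕ) : Primrec (skipMap p a) :=
  Primrec.nat_add.comp Primrec.id <|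
    Primrec.nat_div.comp (Primrec.nat_add.comp Primrec.id (Primrec.const a)) (Primrec.const p)

theorem oqired_of_skipMap {Γ : Type*} {α β : ℕ → Γ} {p a : ℕ}
    (hcolor : ∀ x, 1 ≤ x → β (skipMap p a x) = α x) : OQIred α β := by
  have hmono := skipMap_strictMono p a
  have hone : 1 ≤ skipMap p a 1 := hmono.le_apply
  refine ⟨skipMap p a 1 + 1, skipMap p a,
    IsQI.of_strictMono hmono (Nat.le_succ _) (fun x _ ↦ ?_) hcolor,
    (skipMap_primrec p a).to_comp, fun x y _ _ hxy ↦ hmono.injective hxy⟩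
  rw [skipMap_succ]
  split_ifs <;> omega

theorem str01_eq_one_iff (n : ℕ) : str01 n = 1 ↔ 2 ∣ n := by
  simp [str01, Nat.dvd_iff_mod_eq_zero]

theorem str001_eq_one_iff (n : ℕ) : str001 n = 1 ↔ 3 ∣ n := by
  simp [str001, Nat.dvd_iff_mod_eq_zero]

theorem fin_two_eq_iff_eq_one_iff (i j : Fin 2) : i = j ↔ (i = 1 ↔ j = 1) := by
  decide +revert

theorem oqired_str001_str01 : OQIred str001 str01 := by
  refine oqired_of_skipMap (p := 3) (a := 1) fun x _ ↦ ?_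
  rw [fin_two_eq_iff_eq_one_iff, str01_eq_one_iff, str001_eq_one_iff, skipMap]
  omega

theorem oqired_str01_str001 : OQIred str01 str001 := by
  refine oqired_of_skipMap (p := 2) (a := 0) fun x _ ↦ ?_
  rw [fin_two_eq_iff_eq_one_iff, str01_eq_one_iff, str001_eq_one_iff, skipMap]
  omega

theorem IsQI.not_bijOn_of_str001_str01 {C : ℕ} {f : ℕ → ℕ} (hf : IsQI C str001 str01 f) :
    ¬ Set.BijOn f (Set.Ici 1) (Set.Ici 1) := fun hbij ↦ by
  have hcount := hf.letterCount_le_of_bijOn hbij 1 (2 * (C + 1))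
  rw [letterCount_eq_div str01_eq_one_iff, letterCount_eq_div str001_eq_one_iff] at hcount
  omega

theorem oqi_equiv_but_not_pqi_general :
    OQIred str001 str01 ∧ OQIred str01 str001 ∧
      ¬ ∃ C f, IsQI C str001 str01 f ∧ Set.BijOn f (Set.Ici 1) (Set.Ici 1) :=
  ⟨oqired_str001_str01, oqired_str01_str001, fun ⟨_, _, hf, hbij⟩ ↦
    hf.not_bijOn_of_str001_str01 hbij⟩

/-- The strings `(001)^ω` and `(01)^ω` are 1qi-reducible to each
other (hence 1qi-equivalent), but there is no pqi-reduction from `(001)^ω` to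
`(01)^ω`. -/
theorem oqi_equiv_but_not_pqi :
    OQIred str001 str01 ∧ OQIred str01 str001 ∧ ¬ PQIred str001 str01 :=
  let ⟨hred, hred', hno⟩ := oqi_equiv_but_not_pqi_general
  ⟨hred, hred', fun ⟨C, f, hf, _, hinj, hsurj⟩ ↦
    hno ⟨C, f, hf, hf.2.1, fun x hx y hy ↦ hinj x y hx hy, hsurj⟩⟩
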